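/- Let γ > 0, 1 < α < 2, p > 1, a > 0, b > 0, and let f be locally integrable on [0,∞). Suppose w ∈ C¹([0,∞)), w ≢ 0, the function t ↦ ₀I_t^{2−α}(w(s) − w'(0)s − w(0)) is in AC²([0,T]) for every T > 0, and for almost every t ≥ 0 one has (₀D_t^α w)(t) + a·w(t) = (₀I_t^γ f)(t) and f(t) ≥ b·|w(t)|^p. Then liminf_{t→+∞} |w(t)| = 0, and liminf_{t→+∞} t^{min{(α+γ−1)/p, γ/(p−1)}}·|w(t)| < +∞. -/

import Mathlib

/-!
The proof tests the equation against `(T - t) ^ N` on `[0, T]` for a large integer `N`.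

By Fubini (`rl_swap`), `∫₀ᵀ (T - t)^N (I^σ g)(t) dt` is a positive constant times
`∫₀ᵀ (T - s)^(N + σ) g(s) ds`. Applied twice with `σ = 1` to the absolutely continuous derivative
and the function `k = I^(2-α)(w - w'(0)s - w(0))`, and once with `σ = 2 - α`, this moves both
derivatives off `k` (`moment_identity`), so that

`c ∫ (T - s)^(N+γ) f = c₁ ∫ (T - s)^(N-α) (w - w'(0)s - w(0)) + c₂ T^N + a ∫ (T - s)^N w`.

Since `f ≥ b |w|^p`, Young's inequality (`young_integral`) absorbs both `w`-terms on the right into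
the left side and leaves, for `T ≥ 1` (`weighted_bound`),

`∫₀ᵀ (T - s)^(N+γ) |w|^p ≤ C (T^(N+1-γ/(p-1)) + T^(N+2-α))`.

With `θ = min ((α+γ-1)/p) (γ/(p-1))` both powers are at most `T^(N+γ-θp+1)`. Restricting the
integral with `T = 4R` to `[R, 2R]`, where the weight is comparable to `R^(N+γ)`, yields a point of
`[R, 2R]` at which `s^θ |w s|` is bounded independently of `R` (`dyadic_bound`). Both claims follow,
because `θ > 0`.
-/

open MeasureTheory Filter

/-- Riemann–Liouville fractional integral of order `σ` based at `0`:
`(₀I_t^σ f)(t) = (1/Γ(σ)) ∫₀ᵗ (t−s)^{σ−1} f(s) ds`. -/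
noncomputable def rlInt (σ : ℝ) (f : ℝ → ℝ) (t : ℝ) : ℝ :=
  (1 / Real.Gamma σ) * ∫ s in (0:ℝ)..t, (t - s) ^ (σ - 1) * f s

/-- The function whose second derivative is the (left) Caputo derivative of order `α ∈ (1,2]`:
for `α < 2` it is `₀I_t^{2−α}(w(s) − w'(0)·s − w(0))`, and for `α = 2` it is `w` itself. -/
noncomputable def capKernel (α : ℝ) (w : ℝ → ℝ) : ℝ → ℝ :=
  if α = 2 then w else rlInt (2 - α) (fun s => w s - deriv w 0 * s - w 0)

/-- Left Caputo fractional derivative of order `α ∈ (1,2]`: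
`(₀D_t^α w)(t) = (d²/dt²)[ ₀I_t^{2−α}(w(s) − w'(0)s − w(0)) ](t)` (second derivative of `w` when `α = 2`). -/
noncomputable def caputoD (α : ℝ) (w : ℝ → ℝ) : ℝ → ℝ :=
  deriv (deriv (capKernel α w))

/-- `g ∈ AC²([0,T])`: `g` is differentiable on `[0,T]`, its second derivative is integrable,
and `g'` is the integral of `g''` (i.e. `g'` is absolutely continuous). -/
def AC2On (g : ℝ → ℝ) (T : ℝ) : Prop :=
  (∀ t ∈ Set.Icc (0:ℝ) T, DifferentiableAt ℝ g t) ∧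
  IntervalIntegrable (deriv (deriv g)) volume 0 T ∧
  ∀ t ∈ Set.Icc (0:ℝ) T, deriv g t = deriv g 0 + ∫ s in (0:ℝ)..t, deriv (deriv g) s

/-! ### Moments of fractional integrals -/

/-- The Beta integral `B(N + 1, σ) = ∫₀¹ (1 - u)^N u^(σ-1) du`. -/
noncomputable def betaC (σ : ℝ) (N : ℕ) : ℝ := ∫ u in (0:ℝ)..1, (1 - u) ^ N * u ^ (σ - 1)

lemma betaC_integrable {σ : ℝ} (hσ : 0 < σ) (N : ℕ) (L : ℝ) :
    IntervalIntegrable (fun u : ℝ => (1 - u) ^ N * u ^ (σ - 1)) volume 0 L := by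
  apply IntervalIntegrable.continuousOn_mul
  · exact intervalIntegral.intervalIntegrable_rpow' (by linarith)
  · fun_prop

lemma betaC_pos {σ : ℝ} (hσ : 0 < σ) (N : ℕ) : 0 < betaC σ N := by
  apply intervalIntegral.intervalIntegral_pos_of_pos_on (betaC_integrable hσ N 1) _ one_pos
  intro x hx
  have h1 : 0 < 1 - x := by linarith [hx.2]
  have h2 := Real.rpow_pos_of_pos hx.1 (σ - 1)
  positivity

lemma kernel_integral {σ : ℝ} (hσ : 0 < σ) (N : ℕ) {s T : ℝ} (hs : s ≤ T) :
    ∫ t in s..T, (T - t) ^ N * (t - s) ^ (σ - 1) = betaC σ N * (T - s) ^ (N + σ) := by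
  rcases hs.eq_or_lt with rfl | hs
  · have : (N:ℝ) + σ ≠ 0 := by positivity
    simp [Real.zero_rpow this]
  have hL : 0 < T - s := by linarith
  set L := T - s with hLdef
  have h1 : ∫ t in s..T, (T - t) ^ N * (t - s) ^ (σ - 1)
      = ∫ u in (0:ℝ)..L, (L - u) ^ N * u ^ (σ - 1) := by
    have := intervalIntegral.integral_comp_sub_right (a := s) (b := T)
      (fun u : ℝ => (L - u) ^ N * u ^ (σ - 1)) s
    rw [sub_self, ← hLdef] at this
    rw [← this]
    congr 1; ext t
    rw [hLdef]; ring_nf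
  have h2 := intervalIntegral.integral_comp_mul_left (a := 0) (b := 1)
      (fun u : ℝ => (L - u) ^ N * u ^ (σ - 1)) hL.ne'
  rw [mul_zero, mul_one, smul_eq_mul] at h2
  have h3 : ∫ x in (0:ℝ)..1, (L - L * x) ^ N * (L * x) ^ (σ - 1)
      = L ^ N * L ^ (σ - 1) * betaC σ N := by
    rw [betaC, ← intervalIntegral.integral_const_mul]
    apply intervalIntegral.integral_congr
    intro x hx
    rw [Set.uIcc_of_le zero_le_one] at hx
    simp only
    rw [Real.mul_rpow hL.le hx.1, show L - L * x = L * (1 - x) by ring, mul_pow]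
    ring
  rw [h1]
  have h4 : ∫ u in (0:ℝ)..L, (L - u) ^ N * u ^ (σ - 1) = L * (L ^ N * L ^ (σ - 1) * betaC σ N) := by
    rw [← h3, h2]; field_simp
  rw [h4, Real.rpow_add hL, Real.rpow_natCast, Real.rpow_sub_one hL.ne']
  field_simp

/-- The moment of a Riemann–Liouville integral against `(T - t) ^ N` is a moment of `g` itself.
Fubini applies because the integrand is a bounded factor times a convolution integrand of two
integrable functions; in particular the inner integral exists for almost every `t` even when `σ < 1`. -/
lemma rl_swap {σ : ℝ} (hσ : 0 < σ) (N : ℕ) {T : ℝ} (hT : 0 < T) {g : ℝ → ℝ}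
    (hg : IntervalIntegrable g volume 0 T) :
    ∫ t in (0:ℝ)..T, (T - t) ^ N * rlInt σ g t
      = (betaC σ N / Real.Gamma σ) * ∫ s in (0:ℝ)..T, (T - s) ^ (N + σ) * g s := by
  set G : ℝ → ℝ := (Set.Ioc 0 T).indicator g with hG
  -- For `s, t ∈ (0, T]`, `κ (t - s)` is `(t - s) ^ (σ - 1)` if `s ≤ t` and `0` otherwise.
  set κ : ℝ → ℝ := (Set.Ico 0 T).indicator (fun u => u ^ (σ - 1)) with hκ
  set P : ℝ → ℝ := (Set.Ioc 0 T).indicator (fun t => (T - t) ^ N) with hP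
  have hGi : Integrable G := by
    rw [hG, integrable_indicator_iff measurableSet_Ioc]
    exact (intervalIntegrable_iff_integrableOn_Ioc_of_le hT.le).1 hg
  have hκi : Integrable κ := by
    rw [hκ, integrable_indicator_iff measurableSet_Ico, integrableOn_Ico_iff_integrableOn_Ioo]
    exact (intervalIntegrable_iff_integrableOn_Ioo_of_le hT.le).1
      (intervalIntegral.intervalIntegrable_rpow' (by linarith))
  have hPm : Measurable P := (by fun_prop : Measurable fun t : ℝ => (T - t) ^ N).indicator
    measurableSet_Ioc
  have hPb : ∀ t, ‖P t‖ ≤ T ^ N := by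
    intro t
    rw [hP]
    by_cases ht : t ∈ Set.Ioc 0 T
    · rw [Set.indicator_of_mem ht, norm_pow, Real.norm_eq_abs, abs_of_nonneg (by linarith [ht.2])]
      exact pow_le_pow_left₀ (by linarith [ht.2]) (by linarith [ht.1]) N
    · rw [Set.indicator_of_notMem ht, norm_zero]; positivity
  have hconv := hGi.convolution_integrand (ContinuousLinearMap.mul ℝ ℝ) hκi
  have hH : Integrable (Function.uncurry fun t s => P t * (G s * κ (t - s)))
      ((volume : Measure ℝ).prod volume) := by
    refine Integrable.bdd_mul (c := T ^ N) hconv ?_ ?_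
    · exact (hPm.comp measurable_fst).aestronglyMeasurable
    · exact Eventually.of_forall fun p => hPb p.1
  have hswap := integral_integral_swap hH
  have hl : ∫ t, ∫ s, P t * (G s * κ (t - s))
      = Real.Gamma σ * ∫ t in (0:ℝ)..T, (T - t) ^ N * rlInt σ g t := by
    rw [intervalIntegral.integral_of_le hT.le, ← integral_const_mul,
      ← integral_indicator measurableSet_Ioc]
    congr 1; ext t
    rw [integral_const_mul]
    by_cases ht : t ∈ Set.Ioc 0 T
    · rw [Set.indicator_of_mem ht, hP, Set.indicator_of_mem ht, rlInt]
      have : ∫ s, G s * κ (t - s) = ∫ s in (0:ℝ)..t, (t - s) ^ (σ - 1) * g s := by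
        rw [intervalIntegral.integral_of_le ht.1.le, ← integral_indicator measurableSet_Ioc]
        congr 1; ext s
        by_cases hs : s ∈ Set.Ioc 0 t
        · rw [Set.indicator_of_mem hs, hG, hκ,
            Set.indicator_of_mem (show s ∈ Set.Ioc 0 T from ⟨hs.1, hs.2.trans ht.2⟩),
            Set.indicator_of_mem (show t - s ∈ Set.Ico 0 T from
              ⟨by linarith [hs.2], by linarith [hs.1, ht.2]⟩)]
          ring
        · rw [Set.indicator_of_notMem hs, hG, hκ]
          by_cases hs' : s ∈ Set.Ioc 0 T
          · rw [Set.indicator_of_notMem (a := t - s), mul_zero]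
            intro h
            exact hs ⟨hs'.1, by linarith [h.1]⟩
          · rw [Set.indicator_of_notMem hs', zero_mul]
      rw [this]
      have := (Real.Gamma_pos_of_pos hσ).ne'
      field_simp
    · rw [Set.indicator_of_notMem ht, hP, Set.indicator_of_notMem ht, zero_mul]
  have hr : ∫ s, ∫ t, P t * (G s * κ (t - s))
      = betaC σ N * ∫ s in (0:ℝ)..T, (T - s) ^ (N + σ) * g s := by
    rw [intervalIntegral.integral_of_le hT.le, ← integral_const_mul,
      ← integral_indicator measurableSet_Ioc]
    congr 1; ext s
    by_cases hs : s ∈ Set.Ioc 0 T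
    · rw [Set.indicator_of_mem hs, hG, Set.indicator_of_mem hs]
      have : ∫ t, P t * (g s * κ (t - s)) = g s * ∫ t in s..T, (T - t) ^ N * (t - s) ^ (σ - 1) := by
        rw [intervalIntegral.integral_of_le hs.2, ← integral_Icc_eq_integral_Ioc,
          ← integral_const_mul, ← integral_indicator measurableSet_Icc]
        congr 1; ext t
        by_cases ht : t ∈ Set.Icc s T
        · rw [Set.indicator_of_mem ht, hP, hκ,
            Set.indicator_of_mem (show t ∈ Set.Ioc 0 T from ⟨hs.1.trans_le ht.1, ht.2⟩),
            Set.indicator_of_mem (show t - s ∈ Set.Ico 0 T from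
              ⟨by linarith [ht.1], by linarith [hs.1, ht.2]⟩)]
          ring
        · rw [Set.indicator_of_notMem ht, hP, hκ]
          by_cases ht' : t ∈ Set.Ioc 0 T
          · rw [Set.indicator_of_notMem (a := t - s), mul_zero, mul_zero]
            intro h
            exact ht ⟨by linarith [h.1], ht'.2⟩
          · rw [Set.indicator_of_notMem ht', zero_mul]
      rw [this, kernel_integral hσ N hs.2]
      ring
    · rw [Set.indicator_of_notMem hs, hG, Set.indicator_of_notMem hs]
      simp
  rw [hl, hr] at hswap
  have := (Real.Gamma_pos_of_pos hσ).ne'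
  rw [div_mul_eq_mul_div, ← hswap]
  field_simp

lemma rlInt_one (h : ℝ → ℝ) (t : ℝ) : rlInt 1 h t = ∫ s in (0:ℝ)..t, h s := by
  simp [rlInt]

/-! ### Moments of the Caputo derivative -/

/-- Both derivatives in the Caputo derivative, and the fractional integral inside it, are moved onto
the weight `(T - t) ^ (M + 2)`. The constants do not depend on `T`; the term with `c₂` is the boundary
term at `0`. -/
lemma moment_identity {α : ℝ} {w : ℝ → ℝ} (hα2 : α < 2) (hw : Continuous w)
    (hAC : ∀ T > (0:ℝ), AC2On (capKernel α w) T) (M : ℕ) :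
    ∃ c₁ > (0:ℝ), ∃ c₂ : ℝ, ∀ T > (0:ℝ),
      ∫ t in (0:ℝ)..T, (T - t) ^ (M + 2) * caputoD α w t
        = c₁ * (∫ s in (0:ℝ)..T, (T - s) ^ (M + (2 - α)) * (w s - deriv w 0 * s - w 0))
          + c₂ * T ^ (M + 2) := by
  have hB1 := betaC_pos one_pos (M + 1)
  have hB2 := betaC_pos one_pos M
  have h2α : 0 < 2 - α := by linarith
  have hB3 := div_pos (betaC_pos h2α M) (Real.Gamma_pos_of_pos h2α)
  set B₁ := betaC 1 (M + 1)
  set B₂ := betaC 1 M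
  set B₃ := betaC (2 - α) M / Real.Gamma (2 - α)
  set k := capKernel α w with hk
  refine ⟨B₃ / (B₁ * B₂), by positivity, - deriv k 0 / (B₁ * (M + 2)), fun T hT => ?_⟩
  obtain ⟨hd, hi, hac⟩ := hAC T hT
  have hd'c : ContinuousOn (deriv k) (Set.uIcc 0 T) := by
    have : ContinuousOn (fun t => deriv k 0 + ∫ s in (0:ℝ)..t, deriv (deriv k) s)
        (Set.uIcc 0 T) := by
      apply continuousOn_const.add
      exact intervalIntegral.continuousOn_primitive_interval' hi Set.left_mem_uIcc
    apply this.congr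
    rw [Set.uIcc_of_le hT.le]
    exact hac
  have hd'i : IntervalIntegrable (deriv k) volume 0 T := hd'c.intervalIntegrable
  have s1 := rl_swap one_pos (M + 1) hT hi
  have s2 := rl_swap one_pos M hT hd'i
  have s3 := rl_swap h2α M hT (g := fun s => w s - deriv w 0 * s - w 0)
    (Continuous.intervalIntegrable (by fun_prop) _ _)
  have hk' : rlInt (2 - α) (fun s => w s - deriv w 0 * s - w 0) = k := by
    rw [hk, capKernel, if_neg hα2.ne]
  have hk0 : k 0 = 0 := by rw [← hk', rlInt]; simp
  rw [hk'] at s3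
  have e2 : ∫ t in (0:ℝ)..T, (T - t) ^ M * rlInt 1 (deriv k) t
      = ∫ t in (0:ℝ)..T, (T - t) ^ M * k t := by
    apply intervalIntegral.integral_congr
    intro t ht
    rw [Set.uIcc_of_le hT.le] at ht
    simp only
    rw [rlInt_one, intervalIntegral.integral_eq_sub_of_hasDerivAt (f := k), hk0, sub_zero]
    · intro x hx
      rw [Set.uIcc_of_le ht.1] at hx
      exact (hd x ⟨hx.1, hx.2.trans ht.2⟩).hasDerivAt
    · apply hd'i.mono_set
      rw [Set.uIcc_of_le ht.1, Set.uIcc_of_le hT.le]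
      exact Set.Icc_subset_Icc_right ht.2
  have e1 : ∫ t in (0:ℝ)..T, (T - t) ^ (M + 1) * rlInt 1 (deriv (deriv k)) t
      = (∫ t in (0:ℝ)..T, (T - t) ^ (M + 1) * deriv k t) - deriv k 0 * (T ^ (M + 2) / (M + 2)) := by
    have hpow : ∫ t in (0:ℝ)..T, (T - t) ^ (M + 1) = T ^ (M + 2) / (M + 2) := by
      rw [intervalIntegral.integral_comp_sub_left (fun x => x ^ (M + 1)) T, integral_pow]
      push_cast
      rw [sub_self, sub_zero, zero_pow (by omega)]
      ring_nf
    rw [← hpow, ← intervalIntegral.integral_const_mul, ← intervalIntegral.integral_sub]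
    · apply intervalIntegral.integral_congr
      intro t ht
      rw [Set.uIcc_of_le hT.le] at ht
      simp only
      rw [rlInt_one, hac t ht]
      ring
    · exact hd'i.continuousOn_mul (by fun_prop)
    · exact Continuous.intervalIntegrable (by fun_prop) _ _
  rw [e1] at s1
  rw [e2, s3] at s2
  have n1 : ∀ s : ℝ, (T - s) ^ (((M + 1 : ℕ) : ℝ) + 1) = (T - s) ^ (M + 2) := by
    intro s; rw [← Real.rpow_natCast]; congr 1; push_cast; ring
  have n2 : ∀ s : ℝ, (T - s) ^ ((M : ℝ) + 1) = (T - s) ^ (M + 1) := by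
    intro s; rw [← Real.rpow_natCast]; congr 1; push_cast; ring
  simp only [n1, n2, Real.Gamma_one, div_one] at s1 s2
  have : caputoD α w = deriv (deriv k) := rfl
  rw [this]
  set X := ∫ t in (0:ℝ)..T, (T - t) ^ (M + 2) * deriv (deriv k) t
  set Y := ∫ t in (0:ℝ)..T, (T - t) ^ (M + 1) * deriv k t
  set Z := ∫ s in (0:ℝ)..T, (T - s) ^ (M + (2 - α)) * (w s - deriv w 0 * s - w 0)
  change B₃ * Z = B₂ * Y at s2
  change _ = B₁ * X at s1
  have hY : Y = B₃ * Z / B₂ := by field_simp; linarith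
  have hX : X = (Y - deriv k 0 * (T ^ (M + 2) / (M + 2))) / B₁ := by
    field_simp; field_simp at s1; linarith
  rw [hX, hY]
  field_simp
  ring

/-! ### Young's inequality with weights -/

/-- Weighted Young inequality with a small parameter `ε`, proved by comparing `x ^ q` with
`ε x ^ r y ^ (p - 1)`. -/
lemma young_pointwise {p ε : ℝ} (hp : 1 < p) (hε : 0 < ε) (q r : ℝ) {x y : ℝ}
    (hx : 0 < x) (hy : 0 ≤ y) :
    x ^ q * y ≤ ε * (x ^ r * y ^ p)
      + (1 / ε) ^ (1 / (p - 1)) * x ^ ((p * q - r) / (p - 1)) := by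
  have hp' : 0 < p - 1 := by linarith
  have hK : 0 ≤ (1 / ε) ^ (1 / (p - 1)) * x ^ ((p * q - r) / (p - 1)) := by positivity
  have hE : 0 ≤ ε * (x ^ r * y ^ p) := by positivity
  rcases hy.eq_or_lt with rfl | hy0
  · simpa using add_nonneg hE hK
  rcases le_total (x ^ q) (ε * (x ^ r * y ^ (p - 1))) with h | h
  · have : x ^ q * y ≤ ε * (x ^ r * y ^ p) := by
      calc x ^ q * y ≤ ε * (x ^ r * y ^ (p - 1)) * y := by gcongr
        _ = ε * (x ^ r * y ^ p) := by
          rw [Real.rpow_sub_one hy0.ne']; field_simp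
    linarith
  · have h1 : y ^ (p - 1) ≤ (1 / ε) * x ^ (q - r) := by
      rw [Real.rpow_sub hx]
      have := Real.rpow_pos_of_pos hx r
      rw [one_div_mul_eq_div, div_div, le_div_iff₀ (by positivity)]
      linarith
    have h2 : y ≤ (1 / ε) ^ (1 / (p - 1)) * x ^ ((q - r) / (p - 1)) := by
      have := Real.rpow_le_rpow (by positivity) h1 (by positivity : 0 ≤ 1 / (p - 1))
      rw [← Real.rpow_mul hy, mul_one_div_cancel hp'.ne', Real.rpow_one,
        Real.mul_rpow (by positivity) (by positivity), ← Real.rpow_mul hx.le] at this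
      rwa [mul_one_div] at this
    have h3 : x ^ ((p * q - r) / (p - 1)) = x ^ q * x ^ ((q - r) / (p - 1)) := by
      rw [← Real.rpow_add hx]; congr 1; field_simp; ring
    have h4 : x ^ q * y ≤ (1 / ε) ^ (1 / (p - 1)) * x ^ ((p * q - r) / (p - 1)) := by
      rw [h3]
      calc x ^ q * y ≤ x ^ q * ((1 / ε) ^ (1 / (p - 1)) * x ^ ((q - r) / (p - 1))) := by gcongr
        _ = _ := by ring
    linarith

lemma cont_kernel {q : ℝ} (hq : 0 ≤ q) (T : ℝ) : Continuous fun s : ℝ => (T - s) ^ q :=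
  (continuous_const.sub continuous_id).rpow_const fun _ => Or.inr hq

lemma young_integral {p ε q r : ℝ} {w : ℝ → ℝ} (hw : Continuous w) (hp : 1 < p) (hε : 0 < ε)
    (hq : 0 ≤ q) (hr : 0 ≤ r) (he : 0 ≤ (p * q - r) / (p - 1)) :
    ∃ K ≥ (0:ℝ), ∀ T > (0:ℝ), ∫ s in (0:ℝ)..T, (T - s) ^ q * |w s|
      ≤ ε * (∫ s in (0:ℝ)..T, (T - s) ^ r * |w s| ^ p)
        + K * T ^ ((p * q - r) / (p - 1) + 1) := by
  refine ⟨(1 / ε) ^ (1 / (p - 1)), by positivity, fun T hT => ?_⟩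
  set K := (1 / ε) ^ (1 / (p - 1)) with hKdef
  have hK : 0 ≤ K := by positivity
  set e := (p * q - r) / (p - 1) with hedef
  have hcq := cont_kernel hq T
  have hcr := cont_kernel hr T
  have hwp : Continuous fun s => |w s| ^ p :=
    hw.abs.rpow_const fun _ => Or.inr (by linarith)
  have hi1 : IntervalIntegrable (fun s => (T - s) ^ q * |w s|) volume 0 T :=
    (hcq.mul hw.abs).intervalIntegrable _ _
  have hi2 : IntervalIntegrable (fun s => ε * ((T - s) ^ r * |w s| ^ p)) volume 0 T :=
    (continuous_const.mul (hcr.mul hwp)).intervalIntegrable _ _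
  have hi3 : IntervalIntegrable (fun _ => K * T ^ e) volume 0 T :=
    continuous_const.intervalIntegrable _ _
  have hmono : ∫ s in (0:ℝ)..T, (T - s) ^ q * |w s|
      ≤ ∫ s in (0:ℝ)..T, (ε * ((T - s) ^ r * |w s| ^ p) + K * T ^ e) := by
    apply intervalIntegral.integral_mono_on_of_le_Ioo hT.le hi1 (hi2.add hi3)
    intro s hs
    have hx : 0 < T - s := by linarith [hs.2]
    refine (young_pointwise hp hε q r hx (abs_nonneg (w s))).trans ?_
    gcongr
    linarith [hs.1]
  rw [intervalIntegral.integral_add hi2 hi3, intervalIntegral.integral_const_mul,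
    intervalIntegral.integral_const] at hmono
  refine hmono.trans (le_of_eq ?_)
  rw [Real.rpow_add_one hT.ne', smul_eq_mul]
  ring

/-! ### The a priori estimate -/

/-- The a priori estimate: the weighted `p`-th moment of `w` grows at most polynomially in `T`, with
exponents governed by the equation. -/
lemma weighted_bound {γ α p a b : ℝ} {f w : ℝ → ℝ}
    (hγ : 0 < γ) (hα1 : 1 < α) (hα2 : α < 2) (hp : 1 < p) (ha : 0 < a) (hb : 0 < b)
    (hf : ∀ T > (0:ℝ), IntervalIntegrable f volume 0 T)
    (hw : Continuous w)
    (hAC : ∀ T > (0:ℝ), AC2On (capKernel α w) T)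
    (heq : ∀ᵐ t ∂(volume.restrict (Set.Ici (0:ℝ))),
      caputoD α w t + a * w t = rlInt γ f t ∧ f t ≥ b * |w t| ^ p) :
    ∃ N : ℕ, ∃ C ≥ (0:ℝ), ∀ T ≥ (1:ℝ),
      ∫ s in (0:ℝ)..T, (T - s) ^ (N + γ) * |w s| ^ p
        ≤ C * (T ^ (N + 1 - γ / (p - 1)) + T ^ (N + 2 - α)) := by
  have hp' : 0 < p - 1 := by linarith
  -- `M` is so large that the exponents produced by Young's inequality are nonnegative.
  obtain ⟨M, hM⟩ := exists_nat_ge ((p * α + γ) / (p - 1))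
  obtain ⟨c₁, hc₁, c₂, hmom⟩ := moment_identity hα2 hw hAC M
  set N := M + 2 with hN
  have hNM : (N : ℝ) = M + 2 := by rw [hN]; push_cast; ring
  have hB := div_pos (betaC_pos hγ N) (Real.Gamma_pos_of_pos hγ)
  set B := betaC γ N / Real.Gamma γ with hBdef
  have hM0 : (0:ℝ) ≤ M := Nat.cast_nonneg M
  have he₁ : (p * (N - α) - (N + γ)) / (p - 1) = N - (p * α + γ) / (p - 1) := by
    field_simp; ring
  have he₂ : (p * N - (N + γ)) / (p - 1) = N - γ / (p - 1) := by
    field_simp; ring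
  have hfrac : (p * α + γ) / (p - 1) = p * α / (p - 1) + γ / (p - 1) := add_div _ _ _
  have hfrac' : 0 < p * α / (p - 1) := by positivity
  -- The values of `ε` make each absorbed term a quarter of the left side `B * b * I`.
  obtain ⟨K₁, hK₁, hY₁⟩ := young_integral (p := p) (ε := B * b / (4 * c₁)) (q := N - α) (r := N + γ)
    hw hp (by positivity) (by linarith) (by linarith) (by rw [he₁]; linarith)
  obtain ⟨K₂, hK₂, hY₂⟩ := young_integral (p := p) (ε := B * b / (4 * a)) (q := N) (r := N + γ)
    hw hp (by positivity) (by linarith) (by linarith) (by rw [he₂]; linarith)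
  rw [he₁] at hY₁
  rw [he₂] at hY₂
  set D := |deriv w 0| + |w 0| with hD
  have hD0 : 0 ≤ D := by positivity
  refine ⟨N, (c₁ * K₁ + c₁ * D + |c₂| + a * K₂) * 2 / (B * b), by positivity, fun T hT1 => ?_⟩
  have hT : 0 < T := by linarith
  specialize hY₁ T hT
  specialize hY₂ T hT
  specialize hmom T hT
  have hNα : 0 ≤ (N : ℝ) - α := by linarith
  have hNγ : 0 ≤ (N : ℝ) + γ := by linarith
  have hwp : Continuous fun s => |w s| ^ p :=
    hw.abs.rpow_const fun _ => Or.inr (by linarith)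
  have hIci : ∀ᵐ t ∂(volume.restrict (Set.Icc (0:ℝ) T)),
      caputoD α w t + a * w t = rlInt γ f t ∧ f t ≥ b * |w t| ^ p :=
    ae_restrict_of_ae_restrict_of_subset Set.Icc_subset_Ici_self heq
  have hswap := rl_swap hγ N hT (hf T hT)
  have hint : ∫ t in (0:ℝ)..T, (T - t) ^ N * rlInt γ f t
      = (∫ t in (0:ℝ)..T, (T - t) ^ N * caputoD α w t) + a * ∫ t in (0:ℝ)..T, (T - t) ^ N * w t := by
    rw [← intervalIntegral.integral_const_mul, ← intervalIntegral.integral_add]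
    · apply intervalIntegral.integral_congr_ae_restrict
      rw [Set.uIoc_of_le hT.le]
      filter_upwards [ae_restrict_of_ae_restrict_of_subset Set.Ioc_subset_Icc_self hIci] with t ht
      rw [← ht.1]; ring
    · exact (hAC T hT).2.1.continuousOn_mul (by fun_prop)
    · exact Continuous.intervalIntegrable (by fun_prop) _ _
  have hlow : b * (∫ s in (0:ℝ)..T, (T - s) ^ (N + γ) * |w s| ^ p)
      ≤ ∫ s in (0:ℝ)..T, (T - s) ^ (N + γ) * f s := by
    rw [← intervalIntegral.integral_const_mul]
    apply intervalIntegral.integral_mono_ae_restrict hT.le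
    · exact (continuous_const.mul ((cont_kernel hNγ T).mul hwp)).intervalIntegrable _ _
    · exact (hf T hT).continuousOn_mul (cont_kernel hNγ T).continuousOn
    · filter_upwards [hIci, ae_restrict_mem measurableSet_Icc] with s hs hsI
      have : 0 ≤ (T - s) ^ ((N : ℝ) + γ) := Real.rpow_nonneg (by linarith [hsI.2]) _
      nlinarith [mul_le_mul_of_nonneg_left hs.2 this]
  have hup₁ : ∫ s in (0:ℝ)..T, (T - s) ^ (M + (2 - α)) * (w s - deriv w 0 * s - w 0)
      ≤ (∫ s in (0:ℝ)..T, (T - s) ^ ((N : ℝ) - α) * |w s|) + D * T ^ ((N : ℝ) + 2 - α) := by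
    have hexp : (M : ℝ) + (2 - α) = N - α := by rw [hNM]; ring
    rw [hexp]
    have hi1 : IntervalIntegrable (fun s => (T - s) ^ ((N : ℝ) - α) * |w s|) volume 0 T :=
      ((cont_kernel hNα T).mul hw.abs).intervalIntegrable _ _
    have hi2 : IntervalIntegrable (fun _ => D * T ^ ((N : ℝ) - α + 1)) volume 0 T :=
      continuous_const.intervalIntegrable _ _
    have hm : ∫ s in (0:ℝ)..T, (T - s) ^ ((N : ℝ) - α) * (w s - deriv w 0 * s - w 0)
        ≤ ∫ s in (0:ℝ)..T, ((T - s) ^ ((N : ℝ) - α) * |w s| + D * T ^ ((N : ℝ) - α + 1)) := by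
      apply intervalIntegral.integral_mono_on hT.le _ (hi1.add hi2)
      · intro s hs
        have h0 : 0 ≤ (T - s) ^ ((N : ℝ) - α) := Real.rpow_nonneg (by linarith [hs.2]) _
        have h1 : (T - s) ^ ((N : ℝ) - α) ≤ T ^ ((N : ℝ) - α) :=
          Real.rpow_le_rpow (by linarith [hs.2]) (by linarith [hs.1]) hNα
        have h2 : w s - deriv w 0 * s - w 0 ≤ |w s| + D * T := by
          have i1 : -(deriv w 0 * s) ≤ |deriv w 0| * T := by
            calc -(deriv w 0 * s) ≤ |deriv w 0 * s| := neg_le_abs _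
              _ = |deriv w 0| * s := by rw [abs_mul, abs_of_nonneg hs.1]
              _ ≤ _ := by gcongr; exact hs.2
          have i2 : |w 0| ≤ |w 0| * T := le_mul_of_one_le_right (abs_nonneg _) hT1
          rw [hD]
          linarith [le_abs_self (w s), neg_le_abs (w 0)]
        calc (T - s) ^ ((N : ℝ) - α) * (w s - deriv w 0 * s - w 0)
            ≤ (T - s) ^ ((N : ℝ) - α) * (|w s| + D * T) := by gcongr
          _ = (T - s) ^ ((N : ℝ) - α) * |w s| + (T - s) ^ ((N : ℝ) - α) * (D * T) := by ring
          _ ≤ (T - s) ^ ((N : ℝ) - α) * |w s| + T ^ ((N : ℝ) - α) * (D * T) := by gcongr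
          _ = _ := by rw [Real.rpow_add_one hT.ne']; ring
      · exact ((cont_kernel hNα T).mul (by fun_prop)).intervalIntegrable _ _
    rw [intervalIntegral.integral_add hi1 hi2, intervalIntegral.integral_const] at hm
    refine hm.trans (le_of_eq ?_)
    rw [show (N : ℝ) + 2 - α = N - α + 1 + 1 by ring, Real.rpow_add_one hT.ne' ((N : ℝ) - α + 1),
      smul_eq_mul]
    ring
  have hup₂ : ∫ t in (0:ℝ)..T, (T - t) ^ N * w t ≤ ∫ s in (0:ℝ)..T, (T - s) ^ (N : ℝ) * |w s| := by
    apply intervalIntegral.integral_mono_on hT.le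
    · exact Continuous.intervalIntegrable (by fun_prop) _ _
    · exact ((cont_kernel (Nat.cast_nonneg N) T).mul hw.abs).intervalIntegrable _ _
    · intro s hs
      rw [Real.rpow_natCast]
      have : 0 ≤ (T - s) ^ N := pow_nonneg (by linarith [hs.2]) _
      gcongr
      exact le_abs_self _
  have hT₁ : T ^ ((N : ℝ) - (p * α + γ) / (p - 1) + 1) ≤ T ^ ((N : ℝ) + 1 - γ / (p - 1)) :=
    Real.rpow_le_rpow_of_exponent_le hT1 (by linarith)
  have hT₂ : T ^ N ≤ T ^ ((N : ℝ) + 2 - α) := by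
    rw [← Real.rpow_natCast]
    exact Real.rpow_le_rpow_of_exponent_le hT1 (by linarith)
  have hT₃ : T ^ ((N : ℝ) - γ / (p - 1) + 1) = T ^ ((N : ℝ) + 1 - γ / (p - 1)) := by
    congr 1; ring
  rw [hT₃] at hY₂
  rw [hint, hmom] at hswap
  set I := ∫ s in (0:ℝ)..T, (T - s) ^ (N + γ) * |w s| ^ p
  set X := T ^ ((N : ℝ) + 1 - γ / (p - 1))
  set Y := T ^ ((N : ℝ) + 2 - α)
  have hX : 0 ≤ X := by positivity
  have hY : 0 ≤ Y := by positivity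
  have h1 := mul_le_mul_of_nonneg_left (hup₁.trans (add_le_add_left hY₁ _)) hc₁.le
  have h2 := mul_le_mul_of_nonneg_left (hup₂.trans hY₂) ha.le
  have h3 : c₂ * T ^ N ≤ |c₂| * Y :=
    mul_le_mul (le_abs_self _) hT₂ (by positivity) (abs_nonneg _)
  have h4 := mul_le_mul_of_nonneg_left hlow hB.le
  have h5 : c₁ * (K₁ * T ^ ((N : ℝ) - (p * α + γ) / (p - 1) + 1)) ≤ c₁ * (K₁ * X) := by gcongr
  have i1 : c₁ * (B * b / (4 * c₁) * I) = B * b / 4 * I := by field_simp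
  have i2 : a * (B * b / (4 * a) * I) = B * b / 4 * I := by field_simp
  have hmain : B * b / 2 * I ≤ (c₁ * K₁ + c₁ * D + |c₂| + a * K₂) * (X + Y) := by
    have r : (c₁ * K₁ + c₁ * D + |c₂| + a * K₂) * (X + Y)
        = c₁ * (K₁ * X) + c₁ * (D * Y) + |c₂| * Y + a * (K₂ * X)
          + (c₁ * K₁ * Y + c₁ * D * X + |c₂| * X + a * K₂ * Y) := by ring
    have r' : 0 ≤ c₁ * K₁ * Y + c₁ * D * X + |c₂| * X + a * K₂ * Y := by positivity
    linarith
  have hBb : 0 < B * b := by positivity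
  rw [div_mul_eq_mul_div, le_div_iff₀ hBb]
  linarith

/-! ### Decay along a sequence -/

/-- The a priori estimate forces `s ^ θ * |w s|` to be bounded by a fixed constant somewhere in every
interval `[R, 2R]`, `R ≥ 1`. -/
lemma dyadic_bound {γ α p : ℝ} {w : ℝ → ℝ} (hγ : 0 < γ) (hp : 1 < p)
    (hw : Continuous w) {N : ℕ} {C : ℝ} (hC : 0 ≤ C)
    (hbd : ∀ T ≥ (1:ℝ), ∫ s in (0:ℝ)..T, (T - s) ^ (N + γ) * |w s| ^ p
        ≤ C * (T ^ (N + 1 - γ / (p - 1)) + T ^ (N + 2 - α)))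
    {θ : ℝ} (hθ : 0 ≤ θ) (hθ1 : θ ≤ (α + γ - 1) / p) (hθ2 : θ ≤ γ / (p - 1)) :
    ∃ A > (0:ℝ), ∀ R ≥ (1:ℝ), ∃ s ∈ Set.Icc R (2 * R), s ^ θ * |w s| ≤ A := by
  have hp0 : 0 < p := by linarith
  have hp' : 0 < p - 1 := by linarith
  set E := (N : ℝ) + γ - θ * p + 1 with hE
  -- `A ^ p / 2` exceeds `2 * C * 2 ^ E`, the constant in the upper bound in terms of `(2 * R) ^ E`.
  set A := (4 * C * 2 ^ E + 1) ^ (1 / p) with hA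
  have hApos : 0 < A := by positivity
  have hAp : A ^ p = 4 * C * 2 ^ E + 1 := by
    rw [hA, ← Real.rpow_mul (by positivity), one_div_mul_cancel hp0.ne', Real.rpow_one]
  refine ⟨A, hApos, fun R hR => ?_⟩
  by_contra! hcon
  have hR0 : 0 < R := by linarith
  have hNγ : 0 ≤ (N : ℝ) + γ := by positivity
  have hb := hbd (4 * R) (by linarith)
  have hcont : Continuous fun s => (4 * R - s) ^ ((N : ℝ) + γ) * |w s| ^ p :=
    (cont_kernel hNγ (4 * R)).mul (hw.abs.rpow_const fun _ => Or.inr hp0.le)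
  have hlow : (2 * R - R) • ((2 * R) ^ ((N : ℝ) + γ) * (A ^ p * (2 * R) ^ (-(θ * p))))
      ≤ ∫ s in R..(2 * R), (4 * R - s) ^ ((N : ℝ) + γ) * |w s| ^ p := by
    rw [← intervalIntegral.integral_const]
    apply intervalIntegral.integral_mono_on (by linarith)
      (continuous_const.intervalIntegrable _ _) (hcont.intervalIntegrable _ _)
    intro s hs
    have hs0 : 0 < s := by linarith [hs.1]
    have h1 : (2 * R) ^ ((N : ℝ) + γ) ≤ (4 * R - s) ^ ((N : ℝ) + γ) :=
      Real.rpow_le_rpow (by positivity) (by linarith [hs.2]) hNγ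
    have h2 : A * (2 * R) ^ (-θ) ≤ |w s| := by
      have i1 : s ^ θ ≤ (2 * R) ^ θ := Real.rpow_le_rpow hs0.le hs.2 hθ
      have i2 := hcon s hs
      rw [Real.rpow_neg (by positivity), ← div_eq_mul_inv, div_le_iff₀ (by positivity)]
      nlinarith [abs_nonneg (w s)]
    have h3 : A ^ p * (2 * R) ^ (-(θ * p)) ≤ |w s| ^ p := by
      have := Real.rpow_le_rpow (by positivity) h2 hp0.le
      rwa [Real.mul_rpow hApos.le (by positivity),
        ← Real.rpow_mul (by positivity : (0:ℝ) ≤ 2 * R), neg_mul] at this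
    exact mul_le_mul h1 h3 (by positivity) (h1.trans' (by positivity))
  have hsub : ∫ s in R..(2 * R), (4 * R - s) ^ ((N : ℝ) + γ) * |w s| ^ p
      ≤ ∫ s in (0:ℝ)..(4 * R), (4 * R - s) ^ ((N : ℝ) + γ) * |w s| ^ p := by
    apply intervalIntegral.integral_mono_interval hR0.le (by linarith) (by linarith) _
      (hcont.intervalIntegrable _ _)
    filter_upwards [ae_restrict_mem measurableSet_Ioc] with s hs
    have : 0 ≤ (4 * R - s) ^ ((N : ℝ) + γ) := Real.rpow_nonneg (by linarith [hs.2]) _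
    simp only [Pi.zero_apply]
    positivity
  have hθ1' : θ * p ≤ α + γ - 1 := (le_div_iff₀ hp0).1 hθ1
  have hθ2' : θ * p ≤ γ + γ / (p - 1) := by
    calc θ * p ≤ γ / (p - 1) * p := by gcongr
      _ = γ + γ / (p - 1) := by field_simp; ring
  have hu1 : (4 * R) ^ ((N : ℝ) + 1 - γ / (p - 1)) ≤ (4 * R) ^ E :=
    Real.rpow_le_rpow_of_exponent_le (by linarith) (by rw [hE]; linarith)
  have hu2 : (4 * R) ^ ((N : ℝ) + 2 - α) ≤ (4 * R) ^ E :=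
    Real.rpow_le_rpow_of_exponent_le (by linarith) (by rw [hE]; linarith)
  have h4R : (4 * R) ^ E = 2 ^ E * (2 * R) ^ E := by
    rw [← Real.mul_rpow (by norm_num) (by positivity)]; congr 1; ring
  have h2R : (2 * R) ^ ((N : ℝ) + γ) * (2 * R) ^ (-(θ * p)) * (2 * R) = (2 * R) ^ E := by
    rw [← Real.rpow_add (by positivity), ← Real.rpow_add_one (by positivity)]
    congr 1
  have hlow' : (2 * R - R) • ((2 * R) ^ ((N : ℝ) + γ) * (A ^ p * (2 * R) ^ (-(θ * p))))
      = A ^ p / 2 * (2 * R) ^ E := by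
    rw [← h2R, smul_eq_mul]; ring
  rw [hlow', hAp] at hlow
  have hpos : 0 < (2 * R) ^ E := by positivity
  have hfin : C * ((4 * R) ^ ((N : ℝ) + 1 - γ / (p - 1)) + (4 * R) ^ ((N : ℝ) + 2 - α))
      ≤ C * (2 ^ E * (2 * R) ^ E + 2 ^ E * (2 * R) ^ E) := by
    rw [← h4R]; gcongr
  have := (hlow.trans hsub).trans (hb.trans hfin)
  linarith

/-- Lemma 2.3 (ii): liminf |w| = 0 and liminf t^{min{(α+γ−1)/p, γ/(p−1)}} |w| < ∞. -/
theorem liminf_props_eq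
    (γ α p a b : ℝ) (f w : ℝ → ℝ)
    (hγ : 0 < γ) (hα1 : 1 < α) (hα2 : α < 2) (hp : 1 < p) (ha : 0 < a) (hb : 0 < b)
    (hf : ∀ T > (0:ℝ), IntervalIntegrable f volume 0 T)
    (hw : ContDiff ℝ 1 w)
    (hw0 : ∃ t : ℝ, 0 ≤ t ∧ w t ≠ 0)
    (hAC : ∀ T > (0:ℝ), AC2On (capKernel α w) T)
    (heq : ∀ᵐ t ∂(volume.restrict (Set.Ici (0:ℝ))),
      caputoD α w t + a * w t = rlInt γ f t ∧ f t ≥ b * |w t| ^ p)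
    :
    liminf (fun t : ℝ => ((|w t| : ℝ) : EReal)) atTop = 0 ∧
    liminf (fun t : ℝ =>
      ((t ^ (min ((α + γ - 1) / p) (γ / (p - 1))) * |w t| : ℝ) : EReal)) atTop < ⊤ := by
  set θ := min ((α + γ - 1) / p) (γ / (p - 1)) with hθdef
  have hθ : 0 < θ := lt_min (div_pos (by linarith) (by linarith)) (div_pos hγ (by linarith))
  obtain ⟨N, C, hC, hbd⟩ := weighted_bound hγ hα1 hα2 hp ha hb hf hw.continuous hAC heq
  obtain ⟨A, hA, hdy⟩ := dyadic_bound hγ hp hw.continuous hC hbd hθ.le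
    (min_le_left _ _) (min_le_right _ _)
  have hfreq : ∃ᶠ t : ℝ in atTop, t ^ θ * |w t| ≤ A := by
    rw [frequently_atTop]
    intro R
    obtain ⟨s, hs, hsA⟩ := hdy (max R 1) (le_max_right _ _)
    exact ⟨s, (le_max_left _ _).trans hs.1, hsA⟩
  constructor
  · apply le_antisymm
    · refine EReal.le_of_forall_lt_iff_le.1 fun z hz => ?_
      have hz0 : 0 < z := by exact_mod_cast hz
      apply liminf_le_of_frequently_le'
      have hev : ∀ᶠ t : ℝ in atTop, A / z ≤ t ^ θ ∧ 0 < t :=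
        ((tendsto_rpow_atTop hθ).eventually_ge_atTop _).and (eventually_gt_atTop 0)
      refine (hfreq.and_eventually hev).mono fun t ht => ?_
      obtain ⟨h1, h2, h3⟩ := ht
      rw [EReal.coe_le_coe_iff]
      rw [div_le_iff₀ hz0] at h2
      have : 0 < t ^ θ := Real.rpow_pos_of_pos h3 _
      exact le_of_mul_le_mul_left (h1.trans h2) this
    · apply le_liminf_of_le
      · isBoundedDefault
      · exact Eventually.of_forall fun t => by exact_mod_cast abs_nonneg (w t)
  · refine lt_of_le_of_lt (liminf_le_of_frequently_le' (x := ((A : ℝ) : EReal)) ?_)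
      (EReal.coe_lt_top A)
    exact hfreq.mono fun t ht => by exact_mod_cast ht
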